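/- arXiv:2409.00891 — 2 statements merged into one kernel-verified Lean document; each statement's English description precedes it below -/
import Mathlib

section
/- Let p ≥ 3 be a prime number, let a be an integer with a² ≤ 4p and a ≡ 1 (mod p), and let u be a unit of the ring ℤ_p of p-adic integers satisfying u² − a·u + p = 0. Then the p-adic valuation of 1 − u is exactly 1 (equivalently, p divides 1 − u but p² does not divide 1 − u in ℤ_p). -/
/-!
Write `v = a - u` for the other root of `x² - a x + p`. Since `u v = p` and `u` is a unit, `v` is
divisible by `p`, so `1 - v` is a unit and `(1 - u) (1 - v) = p + 1 - a` shows that `1 - u` and the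
point count `p + 1 - a = #E(𝔽_p)` have the same valuation. Anomality makes the latter a multiple
of `p`, and the Hasse bound places it strictly between `0` and `p²`.
-/

section HasseBound

variable {R : Type*} [CommRing R] [LinearOrder R] [IsStrictOrderedRing R] {q a : R}

theorem add_one_sub_pos_of_sq_le_four_mul (hq : q ≠ 1) (ha : a ^ 2 ≤ 4 * q) : 0 < q + 1 - a := by
  have hsq : a ^ 2 < (q + 1) ^ 2 :=
    calc a ^ 2 ≤ 4 * q := ha
      _ < 4 * q + (q - 1) ^ 2 := lt_add_of_pos_right _ (sq_pos_of_ne_zero (sub_ne_zero.2 hq))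
      _ = (q + 1) ^ 2 := by ring
  have hq_nonneg : 0 ≤ q := by linarith [sq_nonneg a]
  exact sub_pos.2 (lt_of_pow_lt_pow_left₀ 2 (by linarith) hsq)

theorem add_one_sub_lt_sq_of_sq_le_four_mul (hq : 3 ≤ q) (ha : a ^ 2 ≤ 4 * q) :
    q + 1 - a < q ^ 2 := by
  have hlin : 2 * q - 1 ≤ q ^ 2 - q - 1 := by nlinarith
  have hsq : (-a) ^ 2 < (q ^ 2 - q - 1) ^ 2 :=
    calc (-a) ^ 2 = a ^ 2 := neg_sq a
      _ ≤ 4 * q := ha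
      _ < (2 * q - 1) ^ 2 := by nlinarith
      _ ≤ (q ^ 2 - q - 1) ^ 2 := pow_le_pow_left₀ (by linarith) hlin 2
  have hneg : -a < q ^ 2 - q - 1 := lt_of_pow_lt_pow_left₀ 2 (by linarith) hsq
  linarith

end HasseBound

theorem not_sq_dvd_add_one_sub_of_sq_le_four_mul {q a : ℤ} (hq : 3 ≤ q) (ha : a ^ 2 ≤ 4 * q) :
    ¬ q ^ 2 ∣ q + 1 - a := fun hdvd ↦
  (Int.le_of_dvd (add_one_sub_pos_of_sq_le_four_mul (by lia) ha) hdvd).not_gt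
    (add_one_sub_lt_sq_of_sq_le_four_mul hq ha)

theorem associated_one_sub_of_sq_sub_mul_add_eq_zero {R : Type*} [CommRing R] [IsLocalRing R]
    {u a b : R} (hu : IsUnit u) (hb : ¬ IsUnit b) (hroot : u ^ 2 - a * u + b = 0) :
    Associated (1 - u) (b + 1 - a) := by
  have hprod : u * (a - u) = b := by linear_combination -hroot
  have hnonunit : a - u ∈ nonunits R := fun hv ↦ hb (hprod ▸ hu.mul hv)
  have hunit : IsUnit (1 - (a - u)) := IsLocalRing.isUnit_one_sub_self_of_mem_nonunits _ hnonunit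
  have hfactor : (1 - u) * (1 - (a - u)) = b + 1 - a := by linear_combination hprod
  exact hfactor ▸ associated_mul_unit_right _ _ hunit

theorem pow_dvd_one_sub_iff_of_sq_sub_mul_add_eq_zero {p : ℕ} [Fact p.Prime] {a : ℤ} {u : ℤ_[p]}
    (hu : IsUnit u) (hroot : u ^ 2 - (a : ℤ_[p]) * u + (p : ℤ_[p]) = 0) (n : ℕ) :
    (p : ℤ_[p]) ^ n ∣ 1 - u ↔ (p : ℤ) ^ n ∣ p + 1 - a := by
  have hassoc : Associated (1 - u) ((p + 1 - a : ℤ) : ℤ_[p]) := by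
    simpa only [Int.cast_sub, Int.cast_add, Int.cast_natCast, Int.cast_one] using
      associated_one_sub_of_sq_sub_mul_add_eq_zero hu PadicInt.p_nonunit hroot
  rw [hassoc.dvd_iff_dvd_right, PadicInt.pow_p_dvd_int_iff]

/-- Let `p ≥ 3` be a prime, `a` an integer with `a² ≤ 4p` and
`a ≡ 1 (mod p)`, and `u` a unit of `ℤ_p` with `u² − a·u + p = 0`. Then the `p`-adic
valuation of `1 − u` is exactly `1`: `p ∣ 1 − u` but `p² ∤ 1 − u` in `ℤ_p`. -/
theorem ord_one_sub_frobenius_eigenvalue_eq_one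
    (p : ℕ) [Fact p.Prime] (hp3 : 3 ≤ p)
    (a : ℤ) (hHasse : a ^ 2 ≤ 4 * (p : ℤ)) (hanom : (p : ℤ) ∣ a - 1)
    (u : ℤ_[p]) (hu : IsUnit u) (heq : u ^ 2 - (a : ℤ_[p]) * u + (p : ℤ_[p]) = 0) :
    (p : ℤ_[p]) ∣ 1 - u ∧ ¬ (p : ℤ_[p]) ^ 2 ∣ 1 - u := by
  have hdvd_iff := pow_dvd_one_sub_iff_of_sq_sub_mul_add_eq_zero hu heq
  have hcount : (p : ℤ) ∣ p + 1 - a := by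
    simpa only [add_sub_assoc, neg_sub] using dvd_add dvd_rfl (hanom.neg_right)
  constructor
  · simpa only [pow_one, hcount, iff_true] using hdvd_iff 1
  · rw [hdvd_iff 2]
    exact not_sq_dvd_add_one_sub_of_sq_le_four_mul (by exact_mod_cast hp3) hHasse
end

section
/- Let p be a prime and c a natural number. Suppose that for every n ∈ ℕ we are given an abelian group G_n and a subgroup F_n ⊆ G_n with p^c · G_n ⊆ F_n, and for every n ≥ 1 a group homomorphism ν_n : G_n → G_{n−1} satisfying ν_n(F_n) ⊆ F_{n−1} and ν_n(G_n) ⊆ p·G_{n−1} + F_{n−1} (i.e., the induced map G_n/F_n → G_{n−1}/F_{n−1} has image in p·(G_{n−1}/F_{n−1})). Then the two intersections of images in G_0 coincide: ⋂_{n≥0} (ν_1 ∘ ⋯ ∘ ν_n)(G_n) = ⋂_{n≥0} (ν_1 ∘ ⋯ ∘ ν_n)(F_n), where the n = 0 terms are G_0 and F_0 respectively. -/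
/-- The composite `ν₁ ∘ ⋯ ∘ νₙ : G n →+ G 0` of a tower of norm maps
`ν (n) : G (n+1) →+ G n`; for `n = 0` it is the identity of `G 0`. -/
def normComp {G : ℕ → Type*} [∀ n, AddCommGroup (G n)]
    (ν : ∀ n, G (n + 1) →+ G n) : ∀ n, G n →+ G 0
  | 0 => AddMonoidHom.id (G 0)
  | n + 1 => (normComp ν n).comp (ν n)

/-!
On the quotients `G n / F n` each norm map has image in the multiples of `p`, so the composite
norm map from level `n + c` to level `n` has image in the multiples of `p ^ c`, which vanish in
`G n / F n`. Hence an element of `G 0` that is a norm from `G (n + c)` is already a norm from `F n`.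
-/

section NormIter

variable {G : ℕ → Type*}

/-- The composite `ν_{n+1} ∘ ⋯ ∘ ν_{n+k}` of `k` consecutive norm maps, descending from level
`n + k` to level `n`. The recursion splits off the map of highest level, because `n + (k + 1)` is
definitionally `(n + k) + 1`. -/
def normIter [∀ n, AddZeroClass (G n)] (ν : ∀ n, G (n + 1) →+ G n) (n : ℕ) :
    ∀ k, G (n + k) →+ G n
  | 0 => AddMonoidHom.id (G n)
  | k + 1 => (normIter ν n k).comp (ν (n + k))

theorem normComp_comp_normIter [∀ n, AddCommGroup (G n)] (ν : ∀ n, G (n + 1) →+ G n) (n k : ℕ) :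
    (normComp ν n).comp (normIter ν n k) = normComp ν (n + k) := by
  induction k with
  | zero => rfl
  | succ k ih => exact congrArg (AddMonoidHom.comp · (ν (n + k))) ih

theorem mapsTo_normIter [∀ n, AddZeroClass (G n)] {ν : ∀ n, G (n + 1) →+ G n}
    {F : ∀ n, Set (G n)} (hνF : ∀ n, Set.MapsTo (ν n) (F (n + 1)) (F n)) (n k : ℕ) :
    Set.MapsTo (normIter ν n k) (F (n + k)) (F n) := by
  induction k with
  | zero => exact Set.mapsTo_id (F n)
  | succ k ih => exact ih.comp (hνF (n + k))

theorem exists_normIter_eq_pow_nsmul_add [∀ n, AddCommMonoid (G n)] {ν : ∀ n, G (n + 1) →+ G n}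
    {F : ∀ n, AddSubmonoid (G n)} {p : ℕ} (hνF : ∀ n, ∀ x ∈ F (n + 1), ν n x ∈ F n)
    (hνG : ∀ n (x : G (n + 1)), ∃ y : G n, ∃ f ∈ F n, ν n x = p • y + f)
    (n k : ℕ) (x : G (n + k)) :
    ∃ y : G n, ∃ f ∈ F n, normIter ν n k x = p ^ k • y + f := by
  induction k with
  | zero => exact ⟨x, 0, (F n).zero_mem, by simp [normIter]⟩
  | succ k ih =>
    obtain ⟨x', f, hf, hx⟩ := hνG (n + k) x
    obtain ⟨y, g, hg, hx'⟩ := ih x'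
    have hνf : normIter ν n k f ∈ F n :=
      mapsTo_normIter (F := fun n ↦ (F n : Set (G n))) hνF n k hf
    refine ⟨y, p • g + normIter ν n k f, (F n).add_mem ((F n).nsmul_mem hg p) hνf, ?_⟩
    calc normIter ν n k (ν (n + k) x)
        = p • normIter ν n k x' + normIter ν n k f := by rw [hx, map_add, map_nsmul]
      _ = p • (p ^ k • y + g) + normIter ν n k f := by rw [hx']
      _ = p ^ (k + 1) • y + (p • g + normIter ν n k f) := by
        rw [nsmul_add, ← mul_nsmul', ← pow_succ', add_assoc]

end NormIter

theorem iInter_image_eq_of_norm_tower_general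
    (p : ℕ) (G : ℕ → Type*) [∀ n, AddCommGroup (G n)]
    (F : ∀ n, AddSubgroup (G n))
    (hF : ∀ n, ∃ c, ∀ x : G n, p ^ c • x ∈ F n)
    (ν : ∀ n, G (n + 1) →+ G n)
    (hνF : ∀ n, ∀ x ∈ F (n + 1), ν n x ∈ F n)
    (hνG : ∀ n (x : G (n + 1)), ∃ y : G n, ∃ f ∈ F n, ν n x = p • y + f) :
    (⋂ n, Set.range (normComp ν n)) = ⋂ n, (normComp ν n) '' (F n : Set (G n)) := by
  refine Set.Subset.antisymm (Set.subset_iInter fun n ↦ ?_)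
    (Set.iInter_mono fun n ↦ Set.image_subset_range _ _)
  obtain ⟨c, hc⟩ := hF n
  have normIter_mem (z : G (n + c)) : normIter ν n c z ∈ F n := by
    obtain ⟨y, f, hf, hz⟩ :=
      exists_normIter_eq_pow_nsmul_add (F := fun n ↦ (F n).toAddSubmonoid) hνF hνG n c z
    exact hz ▸ (F n).add_mem (hc y) hf
  calc ⋂ m, Set.range (normComp ν m)
      ⊆ Set.range (normComp ν (n + c)) := Set.iInter_subset _ (n + c)
    _ = Set.range ((normComp ν n).comp (normIter ν n c)) := by rw [normComp_comp_normIter]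
    _ ⊆ normComp ν n '' F n := Set.range_subset_iff.2 fun z ↦ ⟨_, normIter_mem z, rfl⟩

/-- Let `p` be a prime and `c` a natural number. Suppose for every `n`
we have an abelian group `G n` and a subgroup `F n ⊆ G n` with `p^c · G n ⊆ F n`, and
for every `n` a homomorphism `ν n : G (n+1) → G n` satisfying `ν n (F (n+1)) ⊆ F n` and
`ν n (G (n+1)) ⊆ p · G n + F n`. Then
`⋂ₙ (ν₁ ∘ ⋯ ∘ νₙ)(G n) = ⋂ₙ (ν₁ ∘ ⋯ ∘ νₙ)(F n)` in `G 0`. -/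
theorem iInter_image_eq_of_norm_tower
    (p c : ℕ) (hp : p.Prime)
    (G : ℕ → Type*) [∀ n, AddCommGroup (G n)]
    (F : ∀ n, AddSubgroup (G n))
    (hF : ∀ n (x : G n), p ^ c • x ∈ F n)
    (ν : ∀ n, G (n + 1) →+ G n)
    (hνF : ∀ n, ∀ x ∈ F (n + 1), ν n x ∈ F n)
    (hνG : ∀ n (x : G (n + 1)), ∃ y : G n, ∃ f ∈ F n, ν n x = p • y + f) :
    (⋂ n, Set.range (normComp ν n)) = ⋂ n, (normComp ν n) '' (F n : Set (G n)) :=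
  iInter_image_eq_of_norm_tower_general p G F (fun n ↦ ⟨c, hF n⟩) ν hνF hνG
end
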